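/- arXiv:1712.08946 — 10 statements merged into one kernel-verified Lean document; each statement's English description precedes it below -/
import Mathlib

section
/- Let Π be a nonempty set of probability measures on a measurable space Ω with lower probability ℓ and upper probability u, and suppose ℓ is k-monotone for a fixed integer k ≥ 2. Let B be a measurable set with u(B) > 0. Then Dempster's conditional lower probability ℓ_D(·|B), given by ℓ_D(A|B) = 1 − u(Aᶜ∩B)/u(B), is again k-monotone: for all measurable sets A₁,…,A_k, ℓ_D(A₁∪⋯∪A_k | B) ≥ Σ_{∅≠I⊆{1,…,k}} (−1)^{|I|−1} ℓ_D(⋂_{i∈I} A_i | B). -/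
open MeasureTheory

variable {Ω : Type*} [MeasurableSpace Ω]

/-- Lower probability of a set of measures: `ℓ(A) = inf_{P ∈ 𝔓} P(A)`. -/
noncomputable def lowP (𝔓 : Set (Measure Ω)) (A : Set Ω) : ℝ :=
  ⨅ P : 𝔓, (P.1 A).toReal

/-- Upper probability of a set of measures: `u(A) = sup_{P ∈ 𝔓} P(A)`. -/
noncomputable def upP (𝔓 : Set (Measure Ω)) (A : Set Ω) : ℝ :=
  ⨆ P : 𝔓, (P.1 A).toReal

/-- Generalized Bayes conditional lower probability: `ℓ_GB(A|B) = inf_P P(A∩B)/P(B)`. -/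
noncomputable def lowGB (𝔓 : Set (Measure Ω)) (A B : Set Ω) : ℝ :=
  ⨅ P : 𝔓, (P.1 (A ∩ B)).toReal / (P.1 B).toReal

/-- Generalized Bayes conditional upper probability: `u_GB(A|B) = sup_P P(A∩B)/P(B)`. -/
noncomputable def upGB (𝔓 : Set (Measure Ω)) (A B : Set Ω) : ℝ :=
  ⨆ P : 𝔓, (P.1 (A ∩ B)).toReal / (P.1 B).toReal

/-- Dempster conditional upper probability: `u_D(A|B) = u(A∩B)/u(B)`. -/
noncomputable def upD (𝔓 : Set (Measure Ω)) (A B : Set Ω) : ℝ :=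
  upP 𝔓 (A ∩ B) / upP 𝔓 B

/-- Dempster conditional lower probability: `ℓ_D(A|B) = 1 - u_D(Aᶜ|B)`. -/
noncomputable def lowD (𝔓 : Set (Measure Ω)) (A B : Set Ω) : ℝ :=
  1 - upD 𝔓 Aᶜ B

/-- Geometric conditional lower probability: `ℓ_G(A|B) = ℓ(A∩B)/ℓ(B)`. -/
noncomputable def lowG (𝔓 : Set (Measure Ω)) (A B : Set Ω) : ℝ :=
  lowP 𝔓 (A ∩ B) / lowP 𝔓 B

/-- Geometric conditional upper probability: `u_G(A|B) = 1 - ℓ_G(Aᶜ|B)`. -/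
noncomputable def upG (𝔓 : Set (Measure Ω)) (A B : Set Ω) : ℝ :=
  1 - lowG 𝔓 Aᶜ B

/-- A set function `ν` is `k`-monotone (a Choquet capacity of order `k`) if for all
measurable `A₁, …, A_k`,
`ν(A₁ ∪ ⋯ ∪ A_k) ≥ ∑_{∅ ≠ I ⊆ {1,…,k}} (-1)^{|I|-1} ν(⋂_{i ∈ I} A_i)`. -/
def kMonotone (ν : Set Ω → ℝ) (k : ℕ) : Prop :=
  ∀ A : Fin k → Set Ω, (∀ i, MeasurableSet (A i)) →
    ∑ I ∈ (Finset.univ.powerset.erase (∅ : Finset (Fin k))),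
      (-1 : ℝ) ^ (I.card - 1) * ν (⋂ i ∈ I, A i) ≤ ν (⋃ i, A i)

lemma upP_eq_aux (𝔓 : Set (Measure Ω)) (hne : 𝔓.Nonempty)
    (hprob : ∀ P ∈ 𝔓, IsProbabilityMeasure P) (C : Set Ω) (hC : MeasurableSet C) :
    upP 𝔓 Cᶜ = 1 - lowP 𝔓 C := by
  have : Nonempty 𝔓 := hne.to_subtype
  have hle : ∀ (P : 𝔓) (S : Set Ω), (P.1 S).toReal ≤ 1 := by
    intro P S
    have := hprob P.1 P.2
    exact measureReal_le_one
  have hc : ∀ P : 𝔓, (P.1 Cᶜ).toReal = 1 - (P.1 C).toReal := by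
    intro P
    have := hprob P.1 P.2
    exact probReal_compl_eq_one_sub hC
  have hbdd : BddBelow (Set.range fun P : 𝔓 => (P.1 C).toReal) :=
    ⟨0, by rintro _ ⟨P, rfl⟩; exact ENNReal.toReal_nonneg⟩
  have hbdd2 : BddAbove (Set.range fun P : 𝔓 => (P.1 Cᶜ).toReal) :=
    ⟨1, by rintro _ ⟨P, rfl⟩; exact hle P _⟩
  unfold upP lowP
  apply le_antisymm
  · apply ciSup_le
    intro P
    rw [hc P]
    have := ciInf_le hbdd P
    linarith
  · have : 1 - (⨆ P : 𝔓, (P.1 Cᶜ).toReal) ≤ ⨅ P : 𝔓, (P.1 C).toReal := by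
      apply le_ciInf
      intro P
      have h1 := le_ciSup hbdd2 P
      have h2 := hc P
      linarith
    linarith

lemma alt_sum_aux (k : ℕ) (hk : 2 ≤ k) :
    ∑ I ∈ (Finset.univ.powerset.erase (∅ : Finset (Fin k))), (-1 : ℝ) ^ (I.card - 1) = 1 := by
  have : Nonempty (Fin k) := ⟨⟨0, by omega⟩⟩
  have h := Finset.sum_powerset_neg_one_pow_card_of_nonempty
    (Finset.univ_nonempty (α := Fin k))
  have h' : ∑ I ∈ (Finset.univ : Finset (Fin k)).powerset, (-1 : ℝ) ^ I.card = 0 := by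
    exact_mod_cast h
  rw [← Finset.add_sum_erase _ _ (Finset.empty_mem_powerset _)] at h'
  have h2 : ∑ I ∈ (Finset.univ.powerset.erase (∅ : Finset (Fin k))), (-1 : ℝ) ^ (I.card - 1)
      = - ∑ I ∈ (Finset.univ.powerset.erase (∅ : Finset (Fin k))), (-1 : ℝ) ^ I.card := by
    rw [← Finset.sum_neg_distrib]
    apply Finset.sum_congr rfl
    intro I hI
    have hI' : I.card ≠ 0 := by
      simpa using (Finset.mem_erase.mp hI).1
    obtain ⟨n, hn⟩ := Nat.exists_eq_succ_of_ne_zero hI'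
    rw [hn]
    simp [pow_succ]
  simp only [Finset.card_empty, pow_zero] at h'
  linarith

/-- if the lower probability of a nonempty set of probability measures is
`k`-monotone (`k ≥ 2`) and `u(B) > 0`, then Dempster's conditional lower probability
`ℓ_D(·|B) = 1 - u(·ᶜ ∩ B)/u(B)` is again `k`-monotone. -/
theorem dempster_preserves_k_monotone
    (𝔓 : Set (Measure Ω)) (hne : 𝔓.Nonempty)
    (hprob : ∀ P ∈ 𝔓, IsProbabilityMeasure P)
    (k : ℕ) (hk : 2 ≤ k)
    (hmono : kMonotone (lowP 𝔓) k)
    (B : Set Ω) (hB : MeasurableSet B) (huB : 0 < upP 𝔓 B) :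
    kMonotone (fun A => lowD 𝔓 A B) k := by
  intro A hA
  have : Nonempty (Fin k) := ⟨⟨0, by omega⟩⟩
  have key : ∀ S : Set Ω, MeasurableSet S →
      lowD 𝔓 S B = (upP 𝔓 B - 1 + lowP 𝔓 (S ∪ Bᶜ)) / upP 𝔓 B := by
    intro S hS
    have h := upP_eq_aux 𝔓 hne hprob (S ∪ Bᶜ) (hS.union hB.compl)
    rw [Set.compl_union, compl_compl] at h
    unfold lowD upD
    rw [h]
    field_simp
    ring
  have hm := hmono (fun i => A i ∪ Bᶜ) (fun i => (hA i).union hB.compl)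
  rw [← Set.iUnion_union] at hm
  have hs : ∀ I : Finset (Fin k), (⋂ i ∈ I, (A i ∪ Bᶜ)) = (⋂ i ∈ I, A i) ∪ Bᶜ := by
    intro I
    simp only [Set.iInter_union]
  simp only [hs] at hm
  have ha := alt_sum_aux k hk
  change ∑ I ∈ (Finset.univ.powerset.erase (∅ : Finset (Fin k))),
      (-1 : ℝ) ^ (I.card - 1) * lowD 𝔓 (⋂ i ∈ I, A i) B ≤ lowD 𝔓 (⋃ i, A i) B
  rw [key _ (MeasurableSet.iUnion hA)]
  have hrw : ∑ I ∈ (Finset.univ.powerset.erase (∅ : Finset (Fin k))),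
      (-1 : ℝ) ^ (I.card - 1) * lowD 𝔓 (⋂ i ∈ I, A i) B
      = ((upP 𝔓 B - 1) * ∑ I ∈ (Finset.univ.powerset.erase (∅ : Finset (Fin k))),
          (-1 : ℝ) ^ (I.card - 1)
        + ∑ I ∈ (Finset.univ.powerset.erase (∅ : Finset (Fin k))),
          (-1 : ℝ) ^ (I.card - 1) * lowP 𝔓 ((⋂ i ∈ I, A i) ∪ Bᶜ)) / upP 𝔓 B := by
    rw [Finset.mul_sum, ← Finset.sum_add_distrib, Finset.sum_div]
    apply Finset.sum_congr rfl
    intro I _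
    rw [key _ (Finset.measurableSet_biInter I fun i _ => hA i)]
    ring
  rw [hrw, ha, mul_one]
  gcongr
end

section
/- Let Π be a nonempty set of probability measures on a measurable space Ω with lower probability ℓ, and suppose ℓ is k-monotone for a fixed integer k ≥ 2. Let B be a measurable set with ℓ(B) > 0. Then the Geometric conditional lower probability ℓ_G(·|B), given by ℓ_G(A|B) = ℓ(A∩B)/ℓ(B), is again k-monotone: for all measurable sets A₁,…,A_k, ℓ_G(A₁∪⋯∪A_k | B) ≥ Σ_{∅≠I⊆{1,…,k}} (−1)^{|I|−1} ℓ_G(⋂_{i∈I} A_i | B). -/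
open MeasureTheory

variable {Ω : Type*} [MeasurableSpace Ω]

/-- if the lower probability of a nonempty set of probability measures is
`k`-monotone (`k ≥ 2`) and `ℓ(B) > 0`, then the Geometric conditional lower probability
`ℓ_G(·|B) = ℓ(· ∩ B)/ℓ(B)` is again `k`-monotone. -/
theorem geometric_preserves_k_monotone
    (𝔓 : Set (Measure Ω)) (hne : 𝔓.Nonempty)
    (hprob : ∀ P ∈ 𝔓, IsProbabilityMeasure P)
    (k : ℕ) (hk : 2 ≤ k)
    (hmono : kMonotone (lowP 𝔓) k)
    (B : Set Ω) (hB : MeasurableSet B) (hlB : 0 < lowP 𝔓 B) :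
    kMonotone (fun A => lowG 𝔓 A B) k := by
  intro A hA
  have h := hmono (fun i => A i ∩ B) (fun i => (hA i).inter hB)
  have h2 := div_le_div_of_nonneg_right h hlB.le
  simp only [lowG]
  rw [Set.iUnion_inter]
  refine le_trans (le_of_eq ?_) h2
  rw [Finset.sum_div]
  refine Finset.sum_congr rfl fun I hI => ?_
  have hI' : I.Nonempty := Finset.nonempty_iff_ne_empty.mpr (Finset.ne_of_mem_erase hI)
  have e : (⋂ i ∈ I, A i) ∩ B = ⋂ i ∈ I, A i ∩ B := by
    obtain ⟨j, hj⟩ := hI'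
    ext x
    simp only [Set.mem_inter_iff, Set.mem_iInter]
    exact ⟨fun h i hi => ⟨h.1 i hi, h.2⟩, fun h => ⟨fun i hi => (h i hi).1, (h j hj).2⟩⟩
  rw [e, mul_div_assoc]
end

section
/- (Equivalence of Simpson's paradox and aggregation sure loss.) Let K ≥ 1 be an integer, let p, q ∈ [0,1]^K satisfy q_k ≤ p_k for all k, and let Λ = {λ ∈ [0,1]^K : q_k ≤ λ_k ≤ p_k for all k}. Let V be a nonempty closed subset of the standard simplex S_K and u ∈ S_K. Then the following are equivalent: (i) sup_{λ∈Λ} λ·u < inf{λ·v : λ∈Λ, v∈V} or inf_{λ∈Λ} λ·u > sup{λ·v : λ∈Λ, v∈V} (u incurs sure loss on Λ relative to V); (ii) p·u < inf_{v∈V} q·v or q·u > sup_{v∈V} p·v ((u,v) induces Simpson's paradox in (p,q) for all v ∈ V). -/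
open Finset

/-- Euclidean dot product on `Fin K → ℝ`. -/
noncomputable def dotR {K : ℕ} (x y : Fin K → ℝ) : ℝ := ∑ k, x k * y k

/-- The convex hull `Λ` of vectors bounded coordinatewise between `q` and `p`. -/
def Lam {K : ℕ} (p q : Fin K → ℝ) : Set (Fin K → ℝ) :=
  {l | ∀ k, q k ≤ l k ∧ l k ≤ p k}

theorem dotR_mono_left {K : ℕ} {l m v : Fin K → ℝ} (h : ∀ k, l k ≤ m k)
    (hv : v ∈ stdSimplex ℝ (Fin K)) : dotR l v ≤ dotR m v :=
  Finset.sum_le_sum fun k _ => mul_le_mul_of_nonneg_right (h k) (hv.1 k)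

theorem dotR_nonneg_of_mem {K : ℕ} {l v : Fin K → ℝ} (h : ∀ k, 0 ≤ l k)
    (hv : v ∈ stdSimplex ℝ (Fin K)) : 0 ≤ dotR l v :=
  Finset.sum_nonneg fun k _ => mul_nonneg (h k) (hv.1 k)

theorem dotR_le_one_of_mem {K : ℕ} {l v : Fin K → ℝ} (h : ∀ k, l k ≤ 1)
    (hv : v ∈ stdSimplex ℝ (Fin K)) : dotR l v ≤ 1 := by
  rw [← hv.2]
  exact Finset.sum_le_sum fun k _ => mul_le_of_le_one_left (hv.1 k) (h k)

/-- Equivalence of Simpson's paradox and aggregation sure loss: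
for `p, q ∈ [0,1]^K` with `q ≤ p`, `Λ = {λ : q ≤ λ ≤ p}`, a nonempty closed set `V` of
desirable aggregation rules in the simplex and `u` in the simplex, `u` incurs sure loss
on `Λ` relative to `V` iff `(u, v)` induces Simpson's paradox in `(p, q)` for all `v ∈ V`. -/
theorem simpson_iff_aggregation_sure_loss
    (K : ℕ) (hK : 1 ≤ K) (p q : Fin K → ℝ)
    (hp : ∀ k, 0 ≤ p k ∧ p k ≤ 1) (hq : ∀ k, 0 ≤ q k ∧ q k ≤ 1)
    (hqp : ∀ k, q k ≤ p k)
    (V : Set (Fin K → ℝ)) (hVne : V.Nonempty) (hVcl : IsClosed V)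
    (hVsub : V ⊆ stdSimplex ℝ (Fin K))
    (u : Fin K → ℝ) (hu : u ∈ stdSimplex ℝ (Fin K)) :
    (sSup ((fun l => dotR l u) '' Lam p q)
        < sInf {x | ∃ l ∈ Lam p q, ∃ v ∈ V, x = dotR l v} ∨
      sInf ((fun l => dotR l u) '' Lam p q)
        > sSup {x | ∃ l ∈ Lam p q, ∃ v ∈ V, x = dotR l v}) ↔
    (dotR p u < sInf ((fun v => dotR q v) '' V) ∨
      dotR q u > sSup ((fun v => dotR p v) '' V)) := by
  have hpL : p ∈ Lam p q := fun k => ⟨hqp k, le_rfl⟩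
  have hqL : q ∈ Lam p q := fun k => ⟨le_rfl, hqp k⟩
  have e1 : sSup ((fun l => dotR l u) '' Lam p q) = dotR p u := by
    apply IsGreatest.csSup_eq
    refine ⟨⟨p, hpL, rfl⟩, ?_⟩
    rintro _ ⟨l, hl, rfl⟩
    exact dotR_mono_left (fun k => (hl k).2) hu
  have e2 : sInf ((fun l => dotR l u) '' Lam p q) = dotR q u := by
    apply IsLeast.csInf_eq
    refine ⟨⟨q, hqL, rfl⟩, ?_⟩
    rintro _ ⟨l, hl, rfl⟩
    exact dotR_mono_left (fun k => (hl k).1) hu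
  obtain ⟨w, hw⟩ := hVne
  have e3 : sInf {x | ∃ l ∈ Lam p q, ∃ v ∈ V, x = dotR l v}
      = sInf ((fun v => dotR q v) '' V) := by
    apply le_antisymm
    · refine le_csInf ⟨_, w, hw, rfl⟩ ?_
      rintro _ ⟨v, hv, rfl⟩
      refine csInf_le ⟨0, ?_⟩ ⟨q, hqL, v, hv, rfl⟩
      rintro _ ⟨l, hl, v, hv, rfl⟩
      exact dotR_nonneg_of_mem (fun k => (hq k).1.trans (hl k).1) (hVsub hv)
    · refine le_csInf ⟨_, q, hqL, w, hw, rfl⟩ ?_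
      rintro _ ⟨l, hl, v, hv, rfl⟩
      refine (csInf_le (s := (fun v => dotR q v) '' V) ⟨0, ?_⟩ ⟨v, hv, rfl⟩).trans
        (dotR_mono_left (fun k => (hl k).1) (hVsub hv))
      rintro _ ⟨v, hv, rfl⟩
      exact dotR_nonneg_of_mem (fun k => (hq k).1) (hVsub hv)
  have e4 : sSup {x | ∃ l ∈ Lam p q, ∃ v ∈ V, x = dotR l v}
      = sSup ((fun v => dotR p v) '' V) := by
    apply le_antisymm
    · refine csSup_le ⟨_, q, hqL, w, hw, rfl⟩ ?_
      rintro _ ⟨l, hl, v, hv, rfl⟩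
      refine (dotR_mono_left (fun k => (hl k).2) (hVsub hv)).trans
        (le_csSup (s := (fun v => dotR p v) '' V) ⟨1, ?_⟩ ⟨v, hv, rfl⟩)
      rintro _ ⟨v, hv, rfl⟩
      exact dotR_le_one_of_mem (fun k => (hp k).2) (hVsub hv)
    · refine csSup_le ⟨_, w, hw, rfl⟩ ?_
      rintro _ ⟨v, hv, rfl⟩
      refine le_csSup ⟨1, ?_⟩ ⟨p, hpL, v, hv, rfl⟩
      rintro _ ⟨l, hl, v, hv, rfl⟩
      exact dotR_le_one_of_mem (fun k => (hl k).2.trans (hp k).2) (hVsub hv)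
  rw [e1, e2, e3, e4]
end

section
/- (ALUP models.) Let K ≥ 1 be an integer, let p, q ∈ [0,1]^K satisfy q_k ≤ p_k for all k, and let Π = {π ∈ S_K : q_k ≤ π_k ≤ p_k for all k} be nonempty, where S_K is the standard simplex. Let u, v ∈ S_K. If the aggregation scheme (u,v) induces Simpson's paradox in (p,q), i.e. p·u < q·v or q·u > p·v, then it incurs sure loss with respect to itself on Π: correspondingly, sup_{π∈Π} π·u < inf_{π∈Π} π·v or inf_{π∈Π} π·u > sup_{π∈Π} π·v. -/
open Finset

/-- ALUP models: if the aggregation scheme `(u, v)` induces Simpson's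
paradox in `(p, q)`, then it incurs (correspondingly directed) sure loss with respect to
itself on the ALUP model `Π = {π ∈ S_K : q ≤ π ≤ p}`. -/
theorem simpson_implies_sure_loss_on_ALUP
    (K : ℕ) (hK : 1 ≤ K) (p q : Fin K → ℝ)
    (hp : ∀ k, 0 ≤ p k ∧ p k ≤ 1) (hq : ∀ k, 0 ≤ q k ∧ q k ≤ 1)
    (hqp : ∀ k, q k ≤ p k)
    (hPine : ({π ∈ stdSimplex ℝ (Fin K) | ∀ k, q k ≤ π k ∧ π k ≤ p k}).Nonempty)
    (u v : Fin K → ℝ)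
    (hu : u ∈ stdSimplex ℝ (Fin K)) (hv : v ∈ stdSimplex ℝ (Fin K)) :
    (dotR p u < dotR q v →
      sSup ((fun π => dotR π u) '' {π ∈ stdSimplex ℝ (Fin K) | ∀ k, q k ≤ π k ∧ π k ≤ p k})
        < sInf ((fun π => dotR π v) '' {π ∈ stdSimplex ℝ (Fin K) | ∀ k, q k ≤ π k ∧ π k ≤ p k})) ∧
    (dotR q u > dotR p v →
      sInf ((fun π => dotR π u) '' {π ∈ stdSimplex ℝ (Fin K) | ∀ k, q k ≤ π k ∧ π k ≤ p k})
        > sSup ((fun π => dotR π v) '' {π ∈ stdSimplex ℝ (Fin K) | ∀ k, q k ≤ π k ∧ π k ≤ p k})) := by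
  have hsup : ∀ w ∈ stdSimplex ℝ (Fin K),
      sSup ((fun π => dotR π w) '' {π ∈ stdSimplex ℝ (Fin K) | ∀ k, q k ≤ π k ∧ π k ≤ p k})
        ≤ dotR p w := by
    intro w hw
    apply csSup_le (hPine.image _)
    rintro _ ⟨π, hπ, rfl⟩
    exact Finset.sum_le_sum fun k _ => mul_le_mul_of_nonneg_right (hπ.2 k).2 (hw.1 k)
  have hinf : ∀ w ∈ stdSimplex ℝ (Fin K),
      dotR q w ≤
      sInf ((fun π => dotR π w) '' {π ∈ stdSimplex ℝ (Fin K) | ∀ k, q k ≤ π k ∧ π k ≤ p k}) := by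
    intro w hw
    apply le_csInf (hPine.image _)
    rintro _ ⟨π, hπ, rfl⟩
    exact Finset.sum_le_sum fun k _ => mul_le_mul_of_nonneg_right (hπ.2 k).1 (hw.1 k)
  exact ⟨fun h => ((hsup u hu).trans_lt h).trans_le (hinf v hv),
    fun h => ((hsup v hv).trans_lt h).trans_le (hinf u hu)⟩
end

section
/- (Generalized Bayes rule produces the widest intervals: Dempster part.) Let Π be a nonempty set of probability measures on a measurable space Ω, and let A, B be measurable sets with ℓ(B) > 0. Then ℓ_GB(A|B) ≤ ℓ_D(A|B) ≤ u_D(A|B) ≤ u_GB(A|B). -/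
open MeasureTheory

variable {Ω : Type*} [MeasurableSpace Ω]

/-- widest intervals, Dempster part:
`ℓ_GB(A|B) ≤ ℓ_D(A|B) ≤ u_D(A|B) ≤ u_GB(A|B)` whenever `ℓ(B) > 0`. -/
theorem genBayes_widest_dempster
    (𝔓 : Set (Measure Ω)) (hne : 𝔓.Nonempty)
    (hprob : ∀ P ∈ 𝔓, IsProbabilityMeasure P)
    (A B : Set Ω) (hA : MeasurableSet A) (hB : MeasurableSet B)
    (hlB : 0 < lowP 𝔓 B) :
    lowGB 𝔓 A B ≤ lowD 𝔓 A B ∧ lowD 𝔓 A B ≤ upD 𝔓 A B ∧ upD 𝔓 A B ≤ upGB 𝔓 A B := by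
  have : Nonempty 𝔓 := hne.to_subtype
  have hle : ∀ (P : 𝔓) (S : Set Ω), (P.1 S).toReal ≤ 1 := by
    intro P S
    have := hprob P.1 P.2
    exact ENNReal.toReal_le_of_le_ofReal zero_le_one (by simpa using prob_le_one)
  have hbdd : ∀ S : Set Ω, BddAbove (Set.range fun P : 𝔓 => (P.1 S).toReal) := by
    intro S
    exact ⟨1, by rintro _ ⟨P, rfl⟩; exact hle P S⟩
  have hlu : ∀ (P : 𝔓) (S : Set Ω), (P.1 S).toReal ≤ upP 𝔓 S := fun P S => le_ciSup (hbdd S) P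
  have hpos : ∀ P : 𝔓, 0 < (P.1 B).toReal := by
    intro P
    refine lt_of_lt_of_le hlB (ciInf_le (f := fun P : 𝔓 => (P.1 B).toReal) ⟨0, ?_⟩ P)
    rintro _ ⟨P, rfl⟩
    exact ENNReal.toReal_nonneg
  have huB : 0 < upP 𝔓 B := lt_of_lt_of_le (hpos (Classical.arbitrary _)) (hlu _ _)
  have hadd : ∀ P : 𝔓, (P.1 (A ∩ B)).toReal + (P.1 (Aᶜ ∩ B)).toReal = (P.1 B).toReal := by
    intro P
    have := hprob P.1 P.2
    rw [← ENNReal.toReal_add (measure_ne_top _ _) (measure_ne_top _ _), Set.inter_comm A,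
      Set.inter_comm Aᶜ, ← Set.diff_eq, measure_inter_add_diff B hA]
  have hr0 : ∀ P : 𝔓, 0 ≤ (P.1 (A ∩ B)).toReal / (P.1 B).toReal := fun P => by positivity
  have hr1 : ∀ P : 𝔓, (P.1 (A ∩ B)).toReal / (P.1 B).toReal ≤ 1 := by
    intro P
    rw [div_le_one (hpos P)]
    have h0 : 0 ≤ (P.1 (Aᶜ ∩ B)).toReal := ENNReal.toReal_nonneg
    linarith [hadd P]
  have hlow : ∀ P : 𝔓, lowGB 𝔓 A B ≤ (P.1 (A ∩ B)).toReal / (P.1 B).toReal := fun P =>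
    ciInf_le (f := fun P : 𝔓 => (P.1 (A ∩ B)).toReal / (P.1 B).toReal)
      ⟨0, by rintro _ ⟨P, rfl⟩; exact hr0 P⟩ P
  have hup : ∀ P : 𝔓, (P.1 (A ∩ B)).toReal / (P.1 B).toReal ≤ upGB 𝔓 A B := fun P =>
    le_ciSup (f := fun P : 𝔓 => (P.1 (A ∩ B)).toReal / (P.1 B).toReal)
      ⟨1, by rintro _ ⟨P, rfl⟩; exact hr1 P⟩ P
  have P₀ : 𝔓 := Classical.arbitrary _
  have hl1 : lowGB 𝔓 A B ≤ 1 := (hlow P₀).trans (hr1 P₀)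
  have hu0 : 0 ≤ upGB 𝔓 A B := (hr0 P₀).trans (hup P₀)
  refine ⟨?_, ?_, ?_⟩
  · have : upD 𝔓 Aᶜ B ≤ 1 - lowGB 𝔓 A B := by
      unfold upD
      rw [div_le_iff₀ huB]
      refine ciSup_le fun P => ?_
      have h1 := (le_div_iff₀ (hpos P)).1 (hlow P)
      have h2 := mul_le_mul_of_nonneg_left (hlu P B) (sub_nonneg.2 hl1)
      linarith [hadd P]
    unfold lowD
    linarith
  · have h : upP 𝔓 B ≤ upP 𝔓 (A ∩ B) + upP 𝔓 (Aᶜ ∩ B) := by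
      refine ciSup_le fun P => ?_
      linarith [hadd P, hlu P (A ∩ B), hlu P (Aᶜ ∩ B)]
    unfold lowD upD
    rw [sub_le_iff_le_add, ← add_div, le_div_iff₀ huB]
    linarith
  · unfold upD
    rw [div_le_iff₀ huB]
    refine ciSup_le fun P => ?_
    have h1 := (div_le_iff₀ (hpos P)).1 (hup P)
    exact h1.trans (mul_le_mul_of_nonneg_left (hlu P B) hu0)
end

section
/- (Generalized Bayes rule produces the widest intervals: Geometric part.) Let Π be a nonempty set of probability measures on a measurable space Ω, and let A, B be measurable sets with ℓ(B) > 0. Then ℓ_GB(A|B) ≤ ℓ_G(A|B) ≤ u_G(A|B) ≤ u_GB(A|B). -/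
open MeasureTheory

variable {Ω : Type*} [MeasurableSpace Ω]

theorem aux_bdd (𝔓 : Set (Measure Ω)) (A : Set Ω) :
    BddBelow (Set.range fun P : 𝔓 => (P.1 A).toReal) :=
  ⟨0, by rintro _ ⟨P, rfl⟩; exact ENNReal.toReal_nonneg⟩

theorem aux_bddGB (𝔓 : Set (Measure Ω)) (A B : Set Ω) :
    BddBelow (Set.range fun P : 𝔓 => (P.1 (A ∩ B)).toReal / (P.1 B).toReal) :=
  ⟨0, by rintro _ ⟨P, rfl⟩; exact div_nonneg ENNReal.toReal_nonneg ENNReal.toReal_nonneg⟩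

theorem aux_low (𝔓 : Set (Measure Ω)) (hne : 𝔓.Nonempty) (A B : Set Ω)
    (hlB : 0 < lowP 𝔓 B) : lowGB 𝔓 A B ≤ lowG 𝔓 A B := by
  haveI : Nonempty 𝔓 := hne.to_subtype
  unfold lowG
  rw [le_div_iff₀ hlB]
  refine le_ciInf fun P => ?_
  have h1 : lowP 𝔓 B ≤ (P.1 B).toReal := ciInf_le (aux_bdd 𝔓 B) P
  have h2 : lowGB 𝔓 A B ≤ (P.1 (A ∩ B)).toReal / (P.1 B).toReal :=
    ciInf_le (aux_bddGB 𝔓 A B) P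
  have h0 : 0 ≤ lowGB 𝔓 A B :=
    le_ciInf fun P => div_nonneg ENNReal.toReal_nonneg ENNReal.toReal_nonneg
  rw [le_div_iff₀ (hlB.trans_le h1)] at h2
  exact (mul_le_mul_of_nonneg_left h1 h0).trans h2

theorem aux_add (P : Measure Ω) [IsProbabilityMeasure P] (A B : Set Ω) (hA : MeasurableSet A) :
    (P (A ∩ B)).toReal + (P (Aᶜ ∩ B)).toReal = (P B).toReal := by
  rw [← ENNReal.toReal_add (measure_ne_top _ _) (measure_ne_top _ _), Set.inter_comm A,
    Set.inter_comm Aᶜ, ← Set.diff_eq, measure_inter_add_diff B hA]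

/-- widest intervals, Geometric part:
`ℓ_GB(A|B) ≤ ℓ_G(A|B) ≤ u_G(A|B) ≤ u_GB(A|B)` whenever `ℓ(B) > 0`. -/
theorem genBayes_widest_geometric
    (𝔓 : Set (Measure Ω)) (hne : 𝔓.Nonempty)
    (hprob : ∀ P ∈ 𝔓, IsProbabilityMeasure P)
    (A B : Set Ω) (hA : MeasurableSet A) (hB : MeasurableSet B)
    (hlB : 0 < lowP 𝔓 B) :
    lowGB 𝔓 A B ≤ lowG 𝔓 A B ∧ lowG 𝔓 A B ≤ upG 𝔓 A B ∧ upG 𝔓 A B ≤ upGB 𝔓 A B := by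
  haveI : Nonempty 𝔓 := hne.to_subtype
  refine ⟨aux_low 𝔓 hne A B hlB, ?_, ?_⟩
  · have h : lowP 𝔓 (A ∩ B) + lowP 𝔓 (Aᶜ ∩ B) ≤ lowP 𝔓 B := by
      refine le_ciInf fun P => ?_
      haveI := hprob P.1 P.2
      rw [← aux_add P.1 A B hA]
      exact add_le_add (ciInf_le (aux_bdd 𝔓 _) P) (ciInf_le (aux_bdd 𝔓 _) P)
    unfold upG lowG
    rw [le_sub_iff_add_le, ← add_div, div_le_one hlB]
    exact h
  · have h1 := aux_low 𝔓 hne Aᶜ B hlB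
    have h2 : 1 - upGB 𝔓 A B ≤ lowGB 𝔓 Aᶜ B := by
      refine le_ciInf fun P => ?_
      have hb : BddAbove (Set.range fun P : 𝔓 => (P.1 (A ∩ B)).toReal / (P.1 B).toReal) := by
        refine ⟨1, ?_⟩
        rintro _ ⟨Q, rfl⟩
        haveI := hprob Q.1 Q.2
        refine div_le_one_of_le₀ ?_ ENNReal.toReal_nonneg
        exact ENNReal.toReal_mono (measure_ne_top _ _) (measure_mono Set.inter_subset_right)
      have hu : (P.1 (A ∩ B)).toReal / (P.1 B).toReal ≤ upGB 𝔓 A B := le_ciSup hb P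
      have hp : 0 < (P.1 B).toReal := hlB.trans_le (ciInf_le (aux_bdd 𝔓 B) P)
      haveI := hprob P.1 P.2
      have hs : (P.1 (A ∩ B)).toReal / (P.1 B).toReal
          + (P.1 (Aᶜ ∩ B)).toReal / (P.1 B).toReal = 1 := by
        rw [← add_div, aux_add P.1 A B hA, div_self hp.ne']
      linarith
    unfold upG
    linarith
end

section
/- (Generalized Bayes rule produces a superset of posterior probability measures.) Let Π be a nonempty set of probability measures on a measurable space Ω, and let B be measurable with ℓ(B) > 0. Then: every probability measure Q on Ω satisfying Q(A) ≥ ℓ_D(A|B) for all measurable A also satisfies Q(A) ≥ ℓ_GB(A|B) for all measurable A; and every probability measure Q on Ω satisfying Q(A) ≥ ℓ_G(A|B) for all measurable A also satisfies Q(A) ≥ ℓ_GB(A|B) for all measurable A. That is, Π_D ⊆ Π_GB and Π_G ⊆ Π_GB, where Π_• denotes the set of probability measures dominating the •-rule conditional lower probability given B. -/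
open MeasureTheory

variable {Ω : Type*} [MeasurableSpace Ω]

/-- Theorem 5.4: the generalized Bayes rule produces a superset of
posterior probability measures: `Π_D ⊆ Π_GB` and `Π_G ⊆ Π_GB`, where `Π_•` is the set of
probability measures dominating the `•`-rule conditional lower probability given `B`. -/
theorem genBayes_posterior_superset
    (𝔓 : Set (Measure Ω)) (hne : 𝔓.Nonempty)
    (hprob : ∀ P ∈ 𝔓, IsProbabilityMeasure P)
    (B : Set Ω) (hB : MeasurableSet B) (hlB : 0 < lowP 𝔓 B) :
    (∀ Q : Measure Ω, IsProbabilityMeasure Q →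
      (∀ A : Set Ω, MeasurableSet A → lowD 𝔓 A B ≤ (Q A).toReal) →
      (∀ A : Set Ω, MeasurableSet A → lowGB 𝔓 A B ≤ (Q A).toReal)) ∧
    (∀ Q : Measure Ω, IsProbabilityMeasure Q →
      (∀ A : Set Ω, MeasurableSet A → lowG 𝔓 A B ≤ (Q A).toReal) →
      (∀ A : Set Ω, MeasurableSet A → lowGB 𝔓 A B ≤ (Q A).toReal)) := by
  obtain ⟨P0, hP0⟩ := hne
  haveI : Nonempty 𝔓 := ⟨⟨P0, hP0⟩⟩
  have bdd : ∀ A : Set Ω, BddBelow (Set.range fun P : 𝔓 => (P.1 A).toReal) := fun A =>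
    ⟨0, by rintro _ ⟨P, rfl⟩; exact ENNReal.toReal_nonneg⟩
  have bdu : ∀ A : Set Ω, BddAbove (Set.range fun P : 𝔓 => (P.1 A).toReal) := fun A =>
    ⟨1, by
      rintro _ ⟨P, rfl⟩
      haveI := hprob P.1 P.2
      exact measureReal_le_one (μ := P.1)⟩
  have hlow : ∀ P : 𝔓, lowP 𝔓 B ≤ (P.1 B).toReal := fun P => ciInf_le (bdd B) P
  have hup : ∀ P : 𝔓, (P.1 B).toReal ≤ upP 𝔓 B := fun P => le_ciSup (bdu B) P
  have hpos : ∀ P : 𝔓, 0 < (P.1 B).toReal := fun P => hlB.trans_le (hlow P)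
  have huB : 0 < upP 𝔓 B := (hpos ⟨P0, hP0⟩).trans_le (hup _)
  have c0 : ∀ A, 0 ≤ lowGB 𝔓 A B := fun A =>
    Real.iInf_nonneg fun P => div_nonneg ENNReal.toReal_nonneg ENNReal.toReal_nonneg
  have hc : ∀ A, ∀ P : 𝔓, lowGB 𝔓 A B * (P.1 B).toReal ≤ (P.1 (A ∩ B)).toReal := by
    intro A P
    rw [← le_div_iff₀ (hpos P)]
    exact ciInf_le (f := fun P : 𝔓 => (P.1 (A ∩ B)).toReal / (P.1 B).toReal)
      ⟨0, by
        rintro _ ⟨P, rfl⟩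
        exact div_nonneg ENNReal.toReal_nonneg ENNReal.toReal_nonneg⟩ P
  have hsplit : ∀ A, MeasurableSet A → ∀ P : 𝔓,
      (P.1 (A ∩ B)).toReal + (P.1 (Aᶜ ∩ B)).toReal = (P.1 B).toReal := by
    intro A hA P
    haveI := hprob P.1 P.2
    have h := measureReal_inter_add_diff (μ := P.1) (s := B) hA
    rw [Set.inter_comm A B, Set.inter_comm Aᶜ B, ← Set.diff_eq]
    exact h
  refine ⟨fun Q _ h A hA => le_trans ?_ (h A hA), fun Q _ h A hA => le_trans ?_ (h A hA)⟩
  · have c1 : lowGB 𝔓 A B ≤ 1 := by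
      have h1 := hc A ⟨P0, hP0⟩
      have h2 := hsplit A hA ⟨P0, hP0⟩
      have h3 := hpos ⟨P0, hP0⟩
      have h4 : 0 ≤ ((⟨P0, hP0⟩ : 𝔓).1 (Aᶜ ∩ B)).toReal := ENNReal.toReal_nonneg
      by_contra hlt
      push Not at hlt
      nlinarith
    have : upD 𝔓 Aᶜ B ≤ 1 - lowGB 𝔓 A B := by
      unfold upD
      rw [div_le_iff₀ huB]
      refine ciSup_le fun P => ?_
      have h1 := hc A P
      have h2 := hsplit A hA P
      have h3 := mul_le_mul_of_nonneg_left (hup P) (sub_nonneg.2 c1)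
      linarith
    unfold lowD
    linarith
  · unfold lowG
    rw [le_div_iff₀ hlB]
    exact le_ciInf fun P => (mul_le_mul_of_nonneg_left (hlow P) (c0 A)).trans (hc A P)
end

section
/- (Counteraction, first half: Geometric dilation forces Dempster contraction.) Let Π be a nonempty set of probability measures on a measurable space Ω whose lower probability ℓ is 2-monotone, i.e. ℓ(S∪T) + ℓ(S∩T) ≥ ℓ(S) + ℓ(T) for all measurable S, T. Let A, B be measurable with ℓ(B) > 0 and ℓ(Bᶜ) > 0. If the partition {B, Bᶜ} strictly dilates A under the Geometric rule, i.e. for both Z ∈ {B, Bᶜ}: ℓ_G(A|Z) < ℓ(A) and u_G(A|Z) > u(A), then {B, Bᶜ} strictly contracts A under Dempster's rule: for both Z ∈ {B, Bᶜ}: ℓ_D(A|Z) > ℓ(A) and u_D(A|Z) < u(A). -/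
open MeasureTheory

variable {Ω : Type*} [MeasurableSpace Ω]

theorem upP_compl_eq (𝔓 : Set (Measure Ω)) (hne : 𝔓.Nonempty)
    (hprob : ∀ P ∈ 𝔓, IsProbabilityMeasure P) (X : Set Ω) (hX : MeasurableSet X) :
    upP 𝔓 Xᶜ = 1 - lowP 𝔓 X := by
  have : Nonempty 𝔓 := hne.to_subtype
  have hc : ∀ P : 𝔓, (P.1 Xᶜ).toReal = 1 - (P.1 X).toReal := fun P => by
    have := hprob P.1 P.2
    exact probReal_compl_eq_one_sub hX
  have hle : ∀ P : 𝔓, (P.1 X).toReal ≤ 1 := fun P => by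
    have := hprob P.1 P.2
    exact measureReal_le_one
  have hb : BddBelow (Set.range fun P : 𝔓 => (P.1 X).toReal) :=
    ⟨0, by rintro _ ⟨P, rfl⟩; exact ENNReal.toReal_nonneg⟩
  have hu : BddAbove (Set.range fun P : 𝔓 => 1 - (P.1 X).toReal) :=
    ⟨1, by
      rintro _ ⟨P, rfl⟩
      have : 0 ≤ (P.1 X).toReal := ENNReal.toReal_nonneg
      simpa using this⟩
  unfold upP lowP
  simp only [hc]
  apply le_antisymm
  · apply ciSup_le
    intro P
    have := ciInf_le hb P
    linarith
  · have : 1 - (⨆ P : 𝔓, (1 - (P.1 X).toReal)) ≤ ⨅ P : 𝔓, (P.1 X).toReal := by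
      apply le_ciInf
      intro P
      have := le_ciSup hu P
      linarith
    linarith

theorem lowP_le_upP (𝔓 : Set (Measure Ω)) (hne : 𝔓.Nonempty)
    (hprob : ∀ P ∈ 𝔓, IsProbabilityMeasure P) (X : Set Ω) :
    lowP 𝔓 X ≤ upP 𝔓 X := by
  have : Nonempty 𝔓 := hne.to_subtype
  have hb : BddBelow (Set.range fun P : 𝔓 => (P.1 X).toReal) :=
    ⟨0, by rintro _ ⟨P, rfl⟩; exact ENNReal.toReal_nonneg⟩
  have hu : BddAbove (Set.range fun P : 𝔓 => (P.1 X).toReal) :=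
    ⟨1, by
      rintro _ ⟨P, rfl⟩
      have := hprob P.1 P.2
      exact measureReal_le_one⟩
  exact ciInf_le_ciSup hb hu

theorem upD_compl_lt (𝔓 : Set (Measure Ω)) (hne : 𝔓.Nonempty)
    (hprob : ∀ P ∈ 𝔓, IsProbabilityMeasure P)
    (h2mono : ∀ S T : Set Ω, MeasurableSet S → MeasurableSet T →
      lowP 𝔓 S + lowP 𝔓 T ≤ lowP 𝔓 (S ∪ T) + lowP 𝔓 (S ∩ T))
    (X W : Set Ω) (hX : MeasurableSet X) (hW : MeasurableSet W)
    (hlW : 0 < lowP 𝔓 W) (hlWc : 0 < lowP 𝔓 Wᶜ)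
    (h : lowG 𝔓 X W < lowP 𝔓 X) :
    upD 𝔓 Xᶜ Wᶜ < 1 - lowP 𝔓 X := by
  have hu := lowP_le_upP 𝔓 hne hprob Wᶜ
  have hpos : 0 < upP 𝔓 Wᶜ := hlWc.trans_le hu
  unfold lowG at h
  rw [div_lt_iff₀ hlW] at h
  unfold upD
  rw [div_lt_iff₀ hpos, ← Set.compl_union, upP_compl_eq 𝔓 hne hprob _ (hX.union hW),
    upP_compl_eq 𝔓 hne hprob _ hW]
  have := h2mono X W hX hW
  nlinarith

/-- Theorem 5.9, first half: if `ℓ` is 2-monotone and the binary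
partition `{B, Bᶜ}` strictly dilates `A` under the Geometric rule, then it strictly
contracts `A` under Dempster's rule. -/
theorem geometric_dilation_forces_dempster_contraction
    (𝔓 : Set (Measure Ω)) (hne : 𝔓.Nonempty)
    (hprob : ∀ P ∈ 𝔓, IsProbabilityMeasure P)
    (h2mono : ∀ S T : Set Ω, MeasurableSet S → MeasurableSet T →
      lowP 𝔓 S + lowP 𝔓 T ≤ lowP 𝔓 (S ∪ T) + lowP 𝔓 (S ∩ T))
    (A B : Set Ω) (hA : MeasurableSet A) (hB : MeasurableSet B)
    (hlB : 0 < lowP 𝔓 B) (hlBc : 0 < lowP 𝔓 Bᶜ)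
    (hdil : ∀ Z ∈ ({B, Bᶜ} : Set (Set Ω)),
      lowG 𝔓 A Z < lowP 𝔓 A ∧ upP 𝔓 A < upG 𝔓 A Z) :
    ∀ Z ∈ ({B, Bᶜ} : Set (Set Ω)),
      lowP 𝔓 A < lowD 𝔓 A Z ∧ upD 𝔓 A Z < upP 𝔓 A := by
  have key : ∀ W : Set Ω, MeasurableSet W → 0 < lowP 𝔓 W → 0 < lowP 𝔓 Wᶜ →
      (lowG 𝔓 A W < lowP 𝔓 A ∧ upP 𝔓 A < upG 𝔓 A W) →
      lowP 𝔓 A < lowD 𝔓 A Wᶜ ∧ upD 𝔓 A Wᶜ < upP 𝔓 A := by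
    intro W hW h1 h2 ⟨h3, h4⟩
    have hu := upP_compl_eq 𝔓 hne hprob Aᶜ hA.compl
    rw [compl_compl] at hu
    unfold upG at h4
    have e1 := upD_compl_lt 𝔓 hne hprob h2mono A W hA hW h1 h2 h3
    have e2 := upD_compl_lt 𝔓 hne hprob h2mono Aᶜ W hA.compl hW h1 h2 (by linarith)
    rw [compl_compl] at e2
    unfold lowD
    constructor <;> linarith
  intro Z hZ
  rcases hZ with rfl | hZ
  · have := key Zᶜ hB.compl hlBc (by rwa [compl_compl]) (hdil _ (by simp))
    rwa [compl_compl] at this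
  · rw [Set.mem_singleton_iff] at hZ
    subst hZ
    exact key B hB hlB hlBc (hdil _ (by simp))
end

section
/- (Counteraction, second half: Dempster dilation forces Geometric contraction.) Let Π be a nonempty set of probability measures on a measurable space Ω whose lower probability ℓ is 2-monotone, i.e. ℓ(S∪T) + ℓ(S∩T) ≥ ℓ(S) + ℓ(T) for all measurable S, T. Let A, B be measurable with ℓ(B) > 0 and ℓ(Bᶜ) > 0. If the partition {B, Bᶜ} strictly dilates A under Dempster's rule, i.e. for both Z ∈ {B, Bᶜ}: ℓ_D(A|Z) < ℓ(A) and u_D(A|Z) > u(A), then {B, Bᶜ} strictly contracts A under the Geometric rule: for both Z ∈ {B, Bᶜ}: ℓ_G(A|Z) > ℓ(A) and u_G(A|Z) < u(A). -/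
open MeasureTheory

variable {Ω : Type*} [MeasurableSpace Ω]

theorem upP_conj_aux (𝔓 : Set (Measure Ω)) (hne : 𝔓.Nonempty)
    (hprob : ∀ P ∈ 𝔓, IsProbabilityMeasure P) (S : Set Ω) (hS : MeasurableSet S) :
    upP 𝔓 Sᶜ = 1 - lowP 𝔓 S := by
  haveI : Nonempty 𝔓 := hne.to_subtype
  have hc : ∀ P : 𝔓, (P.1 Sᶜ).toReal = 1 - (P.1 S).toReal := by
    intro P
    haveI := hprob P.1 P.2
    exact probReal_compl_eq_one_sub (μ := P.1) hS
  have hb : BddBelow (Set.range fun P : 𝔓 => (P.1 S).toReal) :=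
    ⟨0, by rintro _ ⟨P, rfl⟩; exact ENNReal.toReal_nonneg⟩
  have hb' : BddAbove (Set.range fun P : 𝔓 => (P.1 Sᶜ).toReal) :=
    ⟨1, by
      rintro _ ⟨P, rfl⟩
      have := hc P
      have h0 : 0 ≤ (P.1 S).toReal := ENNReal.toReal_nonneg
      show (P.1 Sᶜ).toReal ≤ 1
      linarith⟩
  unfold upP lowP
  apply le_antisymm
  · apply ciSup_le
    intro P
    have := ciInf_le hb P
    have := hc P
    linarith
  · have : 1 - (⨆ P : 𝔓, (P.1 Sᶜ).toReal) ≤ ⨅ P : 𝔓, (P.1 S).toReal := by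
      apply le_ciInf
      intro P
      have := le_ciSup hb' P
      have := hc P
      linarith
    linarith

theorem lowP_key_aux (𝔓 : Set (Measure Ω)) (hne : 𝔓.Nonempty)
    (hprob : ∀ P ∈ 𝔓, IsProbabilityMeasure P)
    (h2mono : ∀ S T : Set Ω, MeasurableSet S → MeasurableSet T →
      lowP 𝔓 S + lowP 𝔓 T ≤ lowP 𝔓 (S ∪ T) + lowP 𝔓 (S ∩ T))
    (S T : Set Ω) (hS : MeasurableSet S) (hT : MeasurableSet T)
    (hT0 : 0 < lowP 𝔓 T) (hTc : 0 < lowP 𝔓 Tᶜ)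
    (h : upP 𝔓 Sᶜ < upD 𝔓 Sᶜ Tᶜ) : lowP 𝔓 S < lowG 𝔓 S T := by
  haveI : Nonempty 𝔓 := hne.to_subtype
  have h1 := upP_conj_aux 𝔓 hne hprob S hS
  have h2 := upP_conj_aux 𝔓 hne hprob T hT
  have h3 := upP_conj_aux 𝔓 hne hprob (S ∪ T) (hS.union hT)
  rw [Set.compl_union] at h3
  have hu : lowP 𝔓 Set.univ = 1 := by
    have : ∀ P : 𝔓, (P.1 Set.univ).toReal = 1 := by
      intro P
      haveI := hprob P.1 P.2
      simp
    simp [lowP, this]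
  have he : lowP 𝔓 ∅ = 0 := by simp [lowP]
  have h4 := h2mono T Tᶜ hT hT.compl
  rw [Set.union_compl_self, Set.inter_compl_self, hu, he] at h4
  have h5 := h2mono S T hS hT
  have hpos : 0 < upP 𝔓 Tᶜ := by linarith
  unfold upD at h
  unfold lowG
  rw [lt_div_iff₀ hpos, h1, h2, h3] at h
  rw [lt_div_iff₀ hT0]
  nlinarith

/-- Theorem 5.9, second half: if `ℓ` is 2-monotone and the binary
partition `{B, Bᶜ}` strictly dilates `A` under Dempster's rule, then it strictly
contracts `A` under the Geometric rule. -/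
theorem dempster_dilation_forces_geometric_contraction
    (𝔓 : Set (Measure Ω)) (hne : 𝔓.Nonempty)
    (hprob : ∀ P ∈ 𝔓, IsProbabilityMeasure P)
    (h2mono : ∀ S T : Set Ω, MeasurableSet S → MeasurableSet T →
      lowP 𝔓 S + lowP 𝔓 T ≤ lowP 𝔓 (S ∪ T) + lowP 𝔓 (S ∩ T))
    (A B : Set Ω) (hA : MeasurableSet A) (hB : MeasurableSet B)
    (hlB : 0 < lowP 𝔓 B) (hlBc : 0 < lowP 𝔓 Bᶜ)
    (hdil : ∀ Z ∈ ({B, Bᶜ} : Set (Set Ω)),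
      lowD 𝔓 A Z < lowP 𝔓 A ∧ upP 𝔓 A < upD 𝔓 A Z) :
    ∀ Z ∈ ({B, Bᶜ} : Set (Set Ω)),
      lowP 𝔓 A < lowG 𝔓 A Z ∧ upG 𝔓 A Z < upP 𝔓 A := by
  have key := lowP_key_aux 𝔓 hne hprob h2mono
  have hAc := upP_conj_aux 𝔓 hne hprob A hA
  have hAA := upP_conj_aux 𝔓 hne hprob Aᶜ hA.compl
  rw [compl_compl] at hAA
  have main : ∀ T : Set Ω, MeasurableSet T → 0 < lowP 𝔓 T → 0 < lowP 𝔓 Tᶜ →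
      (lowD 𝔓 A Tᶜ < lowP 𝔓 A ∧ upP 𝔓 A < upD 𝔓 A Tᶜ) →
      lowP 𝔓 A < lowG 𝔓 A T ∧ upG 𝔓 A T < upP 𝔓 A := by
    intro T hT h0 h0c hd
    obtain ⟨hd1, hd2⟩ := hd
    unfold lowD at hd1
    have k1 := key A T hA hT h0 h0c (by linarith)
    have k2 := key Aᶜ T hA.compl hT h0 h0c (by rw [compl_compl]; exact hd2)
    refine ⟨k1, ?_⟩
    unfold upG
    linarith
  intro Z hZ
  rcases hZ with rfl | hZ
  · exact main Z hB hlB hlBc (hdil _ (by simp))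
  · rw [Set.mem_singleton_iff] at hZ
    subst hZ
    exact main _ hB.compl hlBc (by rwa [compl_compl]) (hdil _ (by simp))
end

section
/- (Ratio bounds for suprema and infima over a set of probability measures.) Let Π be a nonempty set of probability measures on a measurable space Ω and let A, B be measurable sets with P(B) > 0 for every P ∈ Π. Then: (i) sup_{P∈Π} P(A∩B) / sup_{P∈Π} P(B) ≤ sup_{P∈Π} [P(A∩B)/P(B)]; and (ii) if moreover inf_{P∈Π} P(B) > 0, then inf_{P∈Π} P(A∩B) / inf_{P∈Π} P(B) ≥ inf_{P∈Π} [P(A∩B)/P(B)]. -/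
open MeasureTheory

variable {Ω : Type*} [MeasurableSpace Ω]

/-- ratio bounds: (i) `sup P(A∩B) / sup P(B) ≤ sup [P(A∩B)/P(B)]`, and
(ii) if `inf P(B) > 0`, then `inf P(A∩B) / inf P(B) ≥ inf [P(A∩B)/P(B)]`. -/
theorem ratio_bounds_sup_inf
    (𝔓 : Set (Measure Ω)) (hne : 𝔓.Nonempty)
    (hprob : ∀ P ∈ 𝔓, IsProbabilityMeasure P)
    (A B : Set Ω) (hA : MeasurableSet A) (hB : MeasurableSet B)
    (hBpos : ∀ P ∈ 𝔓, 0 < (P B).toReal) :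
    upP 𝔓 (A ∩ B) / upP 𝔓 B ≤ upGB 𝔓 A B ∧
      (0 < lowP 𝔓 B → lowGB 𝔓 A B ≤ lowP 𝔓 (A ∩ B) / lowP 𝔓 B) := by
  haveI : Nonempty 𝔓 := hne.to_subtype
  have hfin : ∀ P : 𝔓, ∀ S : Set Ω, (P.1 S).toReal ≤ 1 := by
    intro P S
    haveI := hprob P.1 P.2
    have h : P.1 S ≤ 1 := prob_le_one
    simpa using ENNReal.toReal_mono ENNReal.one_ne_top h
  have hmono : ∀ P : 𝔓, (P.1 (A ∩ B)).toReal ≤ (P.1 B).toReal := by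
    intro P
    haveI := hprob P.1 P.2
    exact ENNReal.toReal_mono (measure_ne_top _ _) (measure_mono Set.inter_subset_right)
  have hpos : ∀ P : 𝔓, 0 < (P.1 B).toReal := fun P => hBpos P.1 P.2
  have hbB : BddAbove (Set.range fun P : 𝔓 => (P.1 B).toReal) :=
    ⟨1, by rintro _ ⟨P, rfl⟩; exact hfin P B⟩
  have hbQ : BddAbove (Set.range fun P : 𝔓 => (P.1 (A ∩ B)).toReal / (P.1 B).toReal) :=
    ⟨1, by rintro _ ⟨P, rfl⟩; exact (div_le_one (hpos P)).2 (hmono P)⟩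
  have hlB : BddBelow (Set.range fun P : 𝔓 => (P.1 B).toReal) :=
    ⟨0, by rintro _ ⟨P, rfl⟩; exact ENNReal.toReal_nonneg⟩
  have hlQ : BddBelow (Set.range fun P : 𝔓 => (P.1 (A ∩ B)).toReal / (P.1 B).toReal) :=
    ⟨0, by rintro _ ⟨P, rfl⟩; exact div_nonneg ENNReal.toReal_nonneg ENNReal.toReal_nonneg⟩
  constructor
  · have hle : ∀ P : 𝔓, (P.1 B).toReal ≤ upP 𝔓 B := fun P => le_ciSup hbB P
    have hq : ∀ P : 𝔓, (P.1 (A ∩ B)).toReal / (P.1 B).toReal ≤ upGB 𝔓 A B :=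
      fun P => le_ciSup hbQ P
    obtain ⟨P0⟩ := ‹Nonempty 𝔓›
    have h0 : 0 ≤ upGB 𝔓 A B :=
      le_trans (div_nonneg ENNReal.toReal_nonneg ENNReal.toReal_nonneg) (hq P0)
    rw [div_le_iff₀ (lt_of_lt_of_le (hpos P0) (hle P0))]
    haveI : Nonempty 𝔓 := ⟨P0⟩
    refine ciSup_le fun P => ?_
    exact ((div_le_iff₀ (hpos P)).1 (hq P)).trans (mul_le_mul_of_nonneg_left (hle P) h0)
  · intro hlow
    have hle : ∀ P : 𝔓, lowP 𝔓 B ≤ (P.1 B).toReal := fun P => ciInf_le hlB P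
    have hq : ∀ P : 𝔓, lowGB 𝔓 A B ≤ (P.1 (A ∩ B)).toReal / (P.1 B).toReal :=
      fun P => ciInf_le hlQ P
    have h0 : 0 ≤ lowGB 𝔓 A B :=
      le_ciInf fun P => div_nonneg ENNReal.toReal_nonneg ENNReal.toReal_nonneg
    rw [le_div_iff₀ hlow]
    refine le_ciInf fun P => ?_
    exact (mul_le_mul_of_nonneg_left (hle P) h0).trans ((le_div_iff₀ (hpos P)).1 (hq P))
end
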